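/- Let A be any real n×n matrix and let V be a random vector in ℝ^n whose law is the n-fold product of the standard normal distribution N(0,1). Then the real random variables Vᵀ (Aᵀ A) V and Vᵀ (A Aᵀ) V are identically distributed. -/

import Mathlib

open Matrix MeasureTheory ProbabilityTheory

/-- Diagonalization of the quadratic form of a symmetric matrix. -/
lemma quadForm_eq_sum_eigenvalues {n : ℕ} {S : Matrix (Fin n) (Fin n) ℝ} (hS : S.IsHermitian)
    (x : EuclideanSpace ℝ (Fin n)) :
    ∑ i, ∑ j, x i * S i j * x j
      = ∑ k, hS.eigenvalues k * (hS.eigenvectorBasis.repr x k) ^ 2 := by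
  have hentry : ∀ i j, S i j = ∑ k, hS.eigenvectorBasis k i * hS.eigenvalues k *
      hS.eigenvectorBasis k j := by
    intro i j
    conv_lhs => rw [hS.spectral_theorem, Unitary.conjStarAlgAut_apply]
    simp [Matrix.mul_apply, Matrix.diagonal_apply, Matrix.star_apply]
  have hr : ∀ k, hS.eigenvectorBasis.repr x k = ∑ i, x i * hS.eigenvectorBasis k i := by
    intro k
    rw [OrthonormalBasis.repr_apply_apply, PiLp.inner_apply]
    simp
  simp_rw [hr, sq, Finset.sum_mul_sum, hentry, Finset.mul_sum, Finset.sum_mul]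
  symm
  rw [Finset.sum_comm]
  refine Finset.sum_congr rfl fun i _ => ?_
  rw [Finset.sum_comm]
  refine Finset.sum_congr rfl fun j _ => Finset.sum_congr rfl fun k _ => ?_
  ring

/-- The law of a Gaussian quadratic form depends only on the eigenvalues. -/
lemma map_quadForm_stdGaussian {n : ℕ} {S : Matrix (Fin n) (Fin n) ℝ} (hS : S.IsHermitian) :
    (stdGaussian (EuclideanSpace ℝ (Fin n))).map (fun x => ∑ i, ∑ j, x i * S i j * x j)
      = (stdGaussian (EuclideanSpace ℝ (Fin n))).map
        (fun y => ∑ k, hS.eigenvalues k * (y k) ^ 2) := by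
  conv_rhs => rw [← stdGaussian_map hS.eigenvectorBasis.repr]
  rw [Measure.map_map (by fun_prop) (by fun_prop)]
  congr 1
  ext x
  exact quadForm_eq_sum_eigenvalues hS x

/-- if `V` is a standard Gaussian random vector in `ℝ^n`, then the
quadratic forms `Vᵀ (Aᵀ A) V` and `Vᵀ (A Aᵀ) V` are identically distributed. -/
theorem identDistrib_quadForm_transpose_mul_self
    (n : ℕ) (A : Matrix (Fin n) (Fin n) ℝ)
    {Ω : Type*} [MeasurableSpace Ω] (P : Measure Ω) [IsProbabilityMeasure P]
    (V : Ω → (Fin n → ℝ)) (hVmeas : Measurable V)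
    (hVlaw : Measure.map V P =
      Measure.pi (fun _ : Fin n => gaussianReal 0 1)) :
    IdentDistrib
      (fun ω => ∑ i, ∑ j, V ω i * (Aᵀ * A) i j * V ω j)
      (fun ω => ∑ i, ∑ j, V ω i * (A * Aᵀ) i j * V ω j)
      P P := by
  have key : ∀ S : Matrix (Fin n) (Fin n) ℝ,
      P.map (fun ω => ∑ i, ∑ j, V ω i * S i j * V ω j)
        = (stdGaussian (EuclideanSpace ℝ (Fin n))).map
          (fun x => ∑ i, ∑ j, x i * S i j * x j) := by
    intro S
    rw [← map_pi_eq_stdGaussian, ← hVlaw, Measure.map_map (by fun_prop) (by fun_prop),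
      Measure.map_map (by fun_prop) (by fun_prop)]
    rfl
  have h1 : (Aᵀ * A).IsHermitian := by
    simpa using Matrix.isHermitian_conjTranspose_mul_self A
  have h2 : (A * Aᵀ).IsHermitian := by
    simpa using Matrix.isHermitian_mul_conjTranspose_self A
  have he : h1.eigenvalues = h2.eigenvalues :=
    (Matrix.IsHermitian.eigenvalues_eq_eigenvalues_iff h1 h2).2 (Matrix.charpoly_mul_comm _ _)
  refine ⟨by fun_prop, by fun_prop, ?_⟩
  rw [key, key, map_quadForm_stdGaussian h1, map_quadForm_stdGaussian h2, he]
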